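/- Let Θ ⊆ ℝ with the usual order, let X be a set, and let v : X × Θ → ℝ have single-crossing expectational differences (SCED). Let N be an odd positive integer, let θ₁ ≤ θ₂ ≤ … ≤ θ_N be elements of Θ, and let M = (N+1)/2. Then for all finite-support lotteries P, Q on X: the number of indices i ∈ {1,…,N} with Σ_x P(x)·v(x,θ_i) ≥ Σ_x Q(x)·v(x,θ_i) is at least N/2 if and only if Σ_x P(x)·v(x,θ_M) ≥ Σ_x Q(x)·v(x,θ_M). Consequently, the majority preference relation P ⪰_maj Q, defined to hold when at least N/2 of the individuals i weakly prefer P to Q, is transitive. -/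

import Mathlib

/-- A function `f : Θ → ℝ` is single crossing if `θ ↦ sgn (f θ)` is monotone
(increasing or decreasing). -/
def SingleCrossing {Θ : Type*} [PartialOrder Θ] (f : Θ → ℝ) : Prop :=
  Monotone (fun θ => Real.sign (f θ)) ∨ Antitone (fun θ => Real.sign (f θ))

/-- Strictly single crossing: single crossing and no two ordered zeros. -/
def StrictSingleCrossing {Θ : Type*} [PartialOrder Θ] (f : Θ → ℝ) : Prop :=
  SingleCrossing f ∧ ∀ θ' θ'' : Θ, θ' < θ'' → ¬(f θ' = 0 ∧ f θ'' = 0)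

/-- A subset of a partially ordered set is an interval. -/
def IsIntervalSet {Θ : Type*} [PartialOrder Θ] (S : Set Θ) : Prop :=
  ∀ θl θm θh : Θ, θl ∈ S → θh ∈ S → θl < θm → θm < θh → θm ∈ S

/-- Single-crossing differences. -/
def SCD {A : Type*} {Θ : Type*} [PartialOrder Θ] (u : A → Θ → ℝ) : Prop :=
  ∀ a a' : A, SingleCrossing (fun θ => u a θ - u a' θ)

/-- Strict single-crossing differences. -/
def SSCD {A : Type*} {Θ : Type*} [PartialOrder Θ] (u : A → Θ → ℝ) : Prop :=
  ∀ a a' : A, a ≠ a' → StrictSingleCrossing (fun θ => u a θ - u a' θ)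

/-- The choice correspondence `C_u(S, θ)`. -/
def choiceCorr {A : Type*} {Θ : Type*} (u : A → Θ → ℝ) (S : Set A) (θ : Θ) : Set A :=
  {a ∈ S | ∀ b ∈ S, u b θ ≤ u a θ}

/-- `f₁` ratio dominates `f₂`: conditions (RD) and (RD+). -/
def RatioDominates {Θ : Type*} [PartialOrder Θ] (f₁ f₂ : Θ → ℝ) : Prop :=
  (∀ θl θh : Θ, θl < θh → f₁ θl * f₂ θh ≤ f₁ θh * f₂ θl) ∧
  (∀ θl θm θh : Θ, θl < θm → θm < θh →
    (f₁ θl * f₂ θh = f₁ θh * f₂ θl ↔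
      (f₁ θl * f₂ θm = f₁ θm * f₂ θl ∧ f₁ θm * f₂ θh = f₁ θh * f₂ θm)))

/-- `f₁` and `f₂` are ratio ordered. -/
def RatioOrdered {Θ : Type*} [PartialOrder Θ] (f₁ f₂ : Θ → ℝ) : Prop :=
  RatioDominates f₁ f₂ ∨ RatioDominates f₂ f₁

/-- `f₁` strictly ratio dominates `f₂`. -/
def StrictRatioDominates {Θ : Type*} [PartialOrder Θ] (f₁ f₂ : Θ → ℝ) : Prop :=
  ∀ θl θh : Θ, θl < θh → f₁ θl * f₂ θh < f₁ θh * f₂ θl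

/-- `f₁` and `f₂` are strictly ratio ordered. -/
def StrictRatioOrdered {Θ : Type*} [PartialOrder Θ] (f₁ f₂ : Θ → ℝ) : Prop :=
  StrictRatioDominates f₁ f₂ ∨ StrictRatioDominates f₂ f₁

/-- The environment `(A, Θ, u)` is convex. -/
def ConvexEnv {A : Type*} {Θ : Type*} (u : A → Θ → ℝ) : Prop :=
  ∀ a a' : A, ∀ lam : ℝ, 0 < lam → lam < 1 →
    ∃ a'' : A, ∀ θ : Θ, u a'' θ = lam * u a θ + (1 - lam) * u a' θ

/-- `A` is minimal with respect to `u`: no utility-indistinguishable pair. -/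
def MinimalActions {A : Type*} {Θ : Type*} (u : A → Θ → ℝ) : Prop :=
  ∀ a a' : A, a ≠ a' → ∃ θ : Θ, u a θ ≠ u a' θ

/-- `f : Z × Θ → ℝ` is linear combinations SC-preserving. -/
def LinCombSCPreserving {Z : Type*} {Θ : Type*} [PartialOrder Θ] (f : Z → Θ → ℝ) : Prop :=
  ∀ μ : Z → ℝ, (Function.support μ).Finite →
    SingleCrossing (fun θ => ∑ᶠ z, μ z * f z θ)

/-- `f : Z × Θ → ℝ` is linear combinations SSC-preserving. -/
def LinCombSSCPreserving {Z : Type*} {Θ : Type*} [PartialOrder Θ] (f : Z → Θ → ℝ) : Prop :=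
  ∀ μ : Z → ℝ, (Function.support μ).Finite →
    ((∀ θ : Θ, (∑ᶠ z, μ z * f z θ) = 0) ∨ StrictSingleCrossing (fun θ => ∑ᶠ z, μ z * f z θ))

/-- `f : Z × Θ → ℝ` is linear combinations monotonicity-preserving. -/
def LinCombMonPreserving {Z : Type*} {Θ : Type*} [PartialOrder Θ] (f : Z → Θ → ℝ) : Prop :=
  ∀ μ : Z → ℝ, (Function.support μ).Finite →
    (Monotone (fun θ => ∑ᶠ z, μ z * f z θ) ∨ Antitone (fun θ => ∑ᶠ z, μ z * f z θ))

/-- A finite-support lottery on `X`. -/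
def IsLottery {X : Type*} (P : X → ℝ) : Prop :=
  (∀ x, 0 ≤ P x) ∧ (Function.support P).Finite ∧ (∑ᶠ x, P x) = 1

/-- Single-crossing expectational differences. -/
def SCED {X : Type*} {Θ : Type*} [PartialOrder Θ] (v : X → Θ → ℝ) : Prop :=
  ∀ P Q : X → ℝ, IsLottery P → IsLottery Q →
    SingleCrossing (fun θ => (∑ᶠ x, P x * v x θ) - ∑ᶠ x, Q x * v x θ)

/-- At least half of the `N` individuals (with types `θs i`) weakly prefer
lottery `P` to lottery `Q`. -/
def MajPrefers {X Θ' : Type*} {N : ℕ} (v : X → Θ' → ℝ) (θs : Fin N → Θ')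
    (P Q : X → ℝ) : Prop :=
  (N : ℝ) / 2 ≤
    ({i : Fin N | (∑ᶠ x, Q x * v x (θs i)) ≤ ∑ᶠ x, P x * v x (θs i)} : Set (Fin N)).ncard

/-!
The sign of the expected-utility difference of two lotteries is monotone or antitone in the type, so
the types weakly preferring `P` to `Q` form an upper set or a lower set, and so do the individuals,
who are ordered by type. Such a set either contains the median together with everyone on one side of
it, which is more than half of an odd population, or lies strictly on one side of the median, which
is less than half. Hence the majority preference is the preference of the median individual, which
is represented by a utility function and therefore transitive.
-/

/-- `m` is the exact median of the order `α`, in the sense that as many elements lie below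
`m` as above it. It is meant for finite `α`, since `Set.ncard` is `0` on an infinite set. -/
def IsMedian {α : Type*} [Preorder α] (m : α) : Prop :=
  (Set.Iio m).ncard = (Set.Ioi m).ncard

theorem isMedian_fin_iff {N : ℕ} {m : Fin N} : IsMedian m ↔ N = 2 * m + 1 := by
  have card_Iio : (Set.Iio m).ncard = m := by
    rw [← Finset.coe_Iio, Set.ncard_coe_finset, Fin.card_Iio]
  have card_Ioi : (Set.Ioi m).ncard = N - 1 - m := by
    rw [← Finset.coe_Ioi, Set.ncard_coe_finset, Fin.card_Ioi]
  rw [IsMedian, card_Iio, card_Ioi]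
  omega

namespace IsMedian

theorem toDual {α : Type*} [Preorder α] {m : α} (hm : IsMedian m) : IsMedian (OrderDual.toDual m) :=
  hm.symm

variable {α : Type*} [LinearOrder α] [Finite α] {m : α} {s : Set α}

theorem natCard_eq (hm : IsMedian m) : Nat.card α = 2 * (Set.Ioi m).ncard + 1 := by
  have card_Iic : (Set.Iic m).ncard = (Set.Iio m).ncard + 1 := by
    rw [← Set.Iio_insert, Set.ncard_insert_of_notMem Set.self_notMem_Iio]
  have card_split := Set.ncard_add_ncard_compl (Set.Iic m)
  rw [Set.compl_Iic, card_Iic, hm] at card_split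
  omega

theorem natCard_le_two_mul_ncard_iff_of_isUpperSet (hm : IsMedian m) (hs : IsUpperSet s) :
    Nat.card α ≤ 2 * s.ncard ↔ m ∈ s := by
  rw [hm.natCard_eq]
  constructor
  · contrapose!
    intro hms
    have subset_Ioi : s ⊆ Set.Ioi m := fun i hi => lt_of_not_ge fun hle => hms (hs hle hi)
    have := Set.ncard_le_ncard subset_Ioi
    omega
  · intro hms
    have card_Ici : (Set.Ici m).ncard = (Set.Ioi m).ncard + 1 := by
      rw [← Set.Ioi_insert, Set.ncard_insert_of_notMem Set.self_notMem_Ioi]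
    have := Set.ncard_le_ncard (hs.Ici_subset hms)
    omega

theorem natCard_le_two_mul_ncard_iff (hm : IsMedian m) (hs : IsUpperSet s ∨ IsLowerSet s) :
    Nat.card α ≤ 2 * s.ncard ↔ m ∈ s :=
  hs.elim hm.natCard_le_two_mul_ncard_iff_of_isUpperSet
    fun hs => hm.toDual.natCard_le_two_mul_ncard_iff_of_isUpperSet hs.toDual

end IsMedian

theorem real_sign_nonneg_iff {r : ℝ} : 0 ≤ Real.sign r ↔ 0 ≤ r := by
  rcases lt_trichotomy r 0 with h | rfl | h
  · simp [Real.sign_of_neg h, h.not_ge]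
  · simp
  · simp [Real.sign_of_pos h, h.le]

theorem SingleCrossing.isUpperSet_or_isLowerSet_nonneg {Θ : Type*} [PartialOrder Θ] {f : Θ → ℝ}
    (hf : SingleCrossing f) : IsUpperSet {θ | 0 ≤ f θ} ∨ IsLowerSet {θ | 0 ≤ f θ} := by
  simp only [← real_sign_nonneg_iff (r := f _)]
  exact hf.imp (fun h _ _ hle hθ => hθ.trans (h hle)) (fun h _ _ hle hθ => hθ.trans (h hle))

section Preference

variable {X Θ : Type*} {v : X → Θ → ℝ} {P Q R : X → ℝ}

/-- An individual of type `θ` weakly prefers the lottery `P` to the lottery `Q`: the expected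
utility of `P` is at least that of `Q`. -/
def WeaklyPrefers (v : X → Θ → ℝ) (θ : Θ) (P Q : X → ℝ) : Prop :=
  ∑ᶠ x, Q x * v x θ ≤ ∑ᶠ x, P x * v x θ

theorem WeaklyPrefers.trans {θ : Θ} (hPQ : WeaklyPrefers v θ P Q) (hQR : WeaklyPrefers v θ Q R) :
    WeaklyPrefers v θ P R :=
  le_trans hQR hPQ

theorem majPrefers_iff_natCard_le {N : ℕ} {θs : Fin N → Θ} :
    MajPrefers v θs P Q ↔
      Nat.card (Fin N) ≤ 2 * {i | WeaklyPrefers v (θs i) P Q}.ncard := by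
  rw [MajPrefers, div_le_iff₀' two_pos, Nat.card_fin]
  exact_mod_cast Iff.rfl

variable [PartialOrder Θ]

theorem SCED.isUpperSet_or_isLowerSet_weaklyPrefers (hv : SCED v) (hP : IsLottery P)
    (hQ : IsLottery Q) :
    IsUpperSet {θ | WeaklyPrefers v θ P Q} ∨ IsLowerSet {θ | WeaklyPrefers v θ P Q} := by
  simpa only [WeaklyPrefers, sub_nonneg] using (hv P Q hP hQ).isUpperSet_or_isLowerSet_nonneg

theorem SCED.majPrefers_iff_weaklyPrefers_of_isMedian (hv : SCED v) {N : ℕ} {θs : Fin N → Θ}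
    (hθs : Monotone θs) {m : Fin N} (hm : IsMedian m) (hP : IsLottery P) (hQ : IsLottery Q) :
    MajPrefers v θs P Q ↔ WeaklyPrefers v (θs m) P Q :=
  majPrefers_iff_natCard_le.trans <| hm.natCard_le_two_mul_ncard_iff <|
    (hv.isUpperSet_or_isLowerSet_weaklyPrefers hP hQ).imp (·.preimage hθs) (·.preimage hθs)

end Preference

theorem sced_majority_is_median_and_transitive_general {Θ : Type*} [PartialOrder Θ] {X : Type*}
    (v : X → Θ → ℝ) (hsced : SCED v) (N : ℕ) (hodd : Odd N)
    (θs : Fin N → Θ) (hmono : Monotone θs) :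
    (∀ P Q : X → ℝ, IsLottery P → IsLottery Q →
      (MajPrefers v θs P Q ↔
        (∑ᶠ x, Q x * v x (θs ⟨N / 2, Nat.div_lt_self hodd.pos one_lt_two⟩)) ≤
          ∑ᶠ x, P x * v x (θs ⟨N / 2, Nat.div_lt_self hodd.pos one_lt_two⟩))) ∧
    (∀ P Q R : X → ℝ, IsLottery P → IsLottery Q → IsLottery R →
      MajPrefers v θs P Q → MajPrefers v θs Q R → MajPrefers v θs P R) := by
  have hm : IsMedian (⟨N / 2, Nat.div_lt_self hodd.pos one_lt_two⟩ : Fin N) :=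
    isMedian_fin_iff.mpr (Nat.two_mul_div_two_add_one_of_odd hodd).symm
  have median_iff {P Q : X → ℝ} (hP : IsLottery P) (hQ : IsLottery Q) :=
    hsced.majPrefers_iff_weaklyPrefers_of_isMedian hmono hm hP hQ
  refine ⟨fun P Q hP hQ => median_iff hP hQ, fun P Q R hP hQ hR hPQ hQR => ?_⟩
  exact (median_iff hP hR).mpr (((median_iff hP hQ).mp hPQ).trans ((median_iff hQ hR).mp hQR))

/-- Under SCED, majority preference between any two lotteries
coincides with the preference of the median individual; consequently the
majority preference relation is transitive. -/
theorem sced_majority_is_median_and_transitive (Θ : Set ℝ) {X : Type*}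
    (v : X → Θ → ℝ) (hsced : SCED v)
    (N : ℕ) (hodd : Odd N) (hpos : 0 < N)
    (θs : Fin N → Θ) (hmono : Monotone θs) :
    (∀ P Q : X → ℝ, IsLottery P → IsLottery Q →
      (MajPrefers v θs P Q ↔
        (∑ᶠ x, Q x * v x (θs ⟨N / 2, Nat.div_lt_self hpos one_lt_two⟩)) ≤
          ∑ᶠ x, P x * v x (θs ⟨N / 2, Nat.div_lt_self hpos one_lt_two⟩))) ∧
    (∀ P Q R : X → ℝ, IsLottery P → IsLottery Q → IsLottery R →
      MajPrefers v θs P Q → MajPrefers v θs Q R → MajPrefers v θs P R) :=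
  sced_majority_is_median_and_transitive_general v hsced N hodd θs hmono
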